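/- Let P be a vector space partition of F_q^v of type d_l^{u_l}⋯d_2^{u_2}d_1^{u_1}, where u_1, u_2 > 0 and d_l > ⋯ > d_2 > d_1 ≥ 1, and let N be the set of d_1-dimensional members of P. Then for every hyperplane H of F_q^v one has #N ≡ #{U ∈ N : U ⊆ H} (mod q^{d_2−d_1}). -/

import Mathlib

/-!
Fix a hyperplane `H` and a vector `w ∉ H`.  The members of `P` partition the coset `w + H`, which
avoids `0`.  A member inside `H` misses the coset, and any other member `U` spans the whole space
together with `H`, so it meets `w + H` in a translate of `U ∩ H`, that is in `q ^ (dim U - 1)`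
vectors.  Hence `∑ q ^ dim U = q ^ dim V`, summed over the members `U` of `P` not contained in `H`.
Modulo `q ^ d₂` only the members of dimension `d₁` survive, so `q ^ d₂` divides `n * q ^ d₁`, where
`n` counts the `d₁`-dimensional members not contained in `H`.
-/

open Module
open scoped Finset Pointwise

theorem pow_sub_dvd_of_pow_dvd_mul_pow {q a b n : ℕ} (hq : 0 < q) (h : q ^ b ∣ n * q ^ a) :
    q ^ (b - a) ∣ n := by
  obtain hab | hba := le_total a b
  · rw [← pow_sub_mul_pow q hab] at h
    exact Nat.dvd_of_mul_dvd_mul_right (pow_pos hq a) h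
  · simp [Nat.sub_eq_zero_of_le hba]

theorem eq_or_le_of_monotone_fin {l : ℕ} {α : Type*} [Preorder α] {d : Fin l → α}
    (hl : 2 ≤ l) (hd : Monotone d) (i : Fin l) :
    d i = d ⟨0, by omega⟩ ∨ d ⟨1, by omega⟩ ≤ d i := by
  obtain hi | hi := Nat.eq_zero_or_pos i
  · exact .inl (congrArg d (Fin.ext hi))
  · exact .inr (hd hi)

section Partition

variable {R M : Type*} [Ring R] [AddCommGroup M] [Module R M] {P : Finset (Submodule R M)}
  {U H : Submodule R M}

/-- `P` is a vector space partition: every nonzero vector lies in exactly one member of `P`.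
Unlike in the usual definition, the zero subspace is allowed as a member. -/
def IsVectorSpacePartition (P : Finset (Submodule R M)) : Prop :=
  ∀ x : M, x ≠ 0 → ∃! U : Submodule R M, U ∈ P ∧ x ∈ U

theorem IsVectorSpacePartition.sum_ncard_inter (hP : IsVectorSpacePartition P) {A : Set M}
    (hA : A.Finite) (hA₀ : 0 ∉ A) : ∑ U ∈ P, ((U : Set M) ∩ A).ncard = A.ncard := by
  have ne_zero {x : M} (hx : x ∈ A) : x ≠ 0 := ne_of_mem_of_not_mem hx hA₀
  have hcover : ⋃ U ∈ (P : Set (Submodule R M)), (U : Set M) ∩ A = A := by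
    refine (Set.iUnion₂_subset fun _ _ ↦ Set.inter_subset_right).antisymm fun x hx ↦ ?_
    obtain ⟨U, ⟨hU, hxU⟩, -⟩ := hP x (ne_zero hx)
    exact Set.mem_biUnion hU ⟨hxU, hx⟩
  have hdisj : (P : Set (Submodule R M)).PairwiseDisjoint fun U ↦ (U : Set M) ∩ A :=
    fun U hU W hW hne ↦ Set.disjoint_left.2 fun x hxU hxW ↦
      hne ((hP x (ne_zero hxU.2)).unique ⟨hU, hxU.1⟩ ⟨hW, hxW.1⟩)
  rw [← finsum_mem_coe_finset, ← P.finite_toSet.ncard_biUnion (fun _ _ ↦ hA.inter_of_right _) hdisj,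
    hcover]

theorem ncard_inter_vadd_of_mem_sup {w : M} (hw : w ∈ U ⊔ H) :
    ((U : Set M) ∩ (w +ᵥ (H : Set M))).ncard = Nat.card ↥(U ⊓ H) := by
  obtain ⟨u, hu, h, hh, rfl⟩ := Submodule.mem_sup.1 hw
  have hU : u +ᵥ (U : Set M) = U := vadd_coe_set hu
  have hH : h +ᵥ (H : Set M) = H := vadd_coe_set hh
  calc ((U : Set M) ∩ ((u + h) +ᵥ (H : Set M))).ncard
      = (u +ᵥ ((U : Set M) ∩ H)).ncard := by rw [add_vadd, hH, Set.vadd_set_inter, hU]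
    _ = Nat.card ↥(U ⊓ H) := by
        rw [Set.ncard_vadd_set]
        exact (Nat.card_coe_set_eq _).symm

theorem inter_vadd_eq_empty_of_le {w : M} (hU : U ≤ H) (hw : w ∉ H) :
    (U : Set M) ∩ (w +ᵥ (H : Set M)) = ∅ := by
  rw [← Set.disjoint_iff_inter_eq_empty, Set.disjoint_left]
  rintro _ hx ⟨h, hh, rfl⟩
  exact hw ((H.add_mem_iff_left hh).1 (hU hx))

open scoped Classical in
theorem IsVectorSpacePartition.sum_natCard_inf [Finite H] (hP : IsVectorSpacePartition P)
    (hH : IsCoatom H) : ∑ U ∈ P with ¬ U ≤ H, Nat.card ↥(U ⊓ H) = Nat.card H := by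
  obtain ⟨w, -, hw⟩ := SetLike.exists_of_lt hH.lt_top
  have hzero : 0 ∉ w +ᵥ (H : Set M) := by
    rintro ⟨h, hh, hwh : w + h = 0⟩
    exact hw ((H.add_mem_iff_left hh).1 (hwh ▸ H.zero_mem))
  calc ∑ U ∈ P with ¬ U ≤ H, Nat.card ↥(U ⊓ H)
      = ∑ U ∈ P with ¬ U ≤ H, ((U : Set M) ∩ (w +ᵥ (H : Set M))).ncard := by
        refine Finset.sum_congr rfl fun U hU ↦ (ncard_inter_vadd_of_mem_sup ?_).symm
        rw [hH.2 _ (right_lt_sup.2 (Finset.mem_filter.1 hU).2)]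
        exact Submodule.mem_top
    _ = ∑ U ∈ P, ((U : Set M) ∩ (w +ᵥ (H : Set M))).ncard := by
        refine Finset.sum_filter_of_ne fun U _ hne hle ↦ hne ?_
        rw [inter_vadd_eq_empty_of_le hle hw, Set.ncard_empty]
    _ = (w +ᵥ (H : Set M)).ncard := hP.sum_ncard_inter (Set.toFinite (H : Set M)).vadd_set hzero
    _ = Nat.card H := by
        rw [Set.ncard_vadd_set]
        exact (Nat.card_coe_set_eq _).symm

end Partition

section Hyperplane

variable {K V : Type*} [DivisionRing K] [AddCommGroup V] [Module K V]
  [Module.Finite K V] {P : Finset (Submodule K V)} {U H : Submodule K V}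

theorem isCoatom_iff_finrank_add_one_eq : IsCoatom H ↔ finrank K H + 1 = finrank K V := by
  rw [← isSimpleModule_iff_isCoatom, isSimpleModule_iff_finrank_eq_one,
    ← H.finrank_quotient_add_finrank]
  omega

theorem finrank_inf_add_one_of_isCoatom (hH : IsCoatom H) (hU : ¬ U ≤ H) :
    finrank K ↥(U ⊓ H) + 1 = finrank K U := by
  have hsup : U ⊔ H = ⊤ := hH.2 _ (right_lt_sup.2 hU)
  have hfinrank := Submodule.finrank_sup_add_finrank_inf_eq U H
  rw [hsup, finrank_top, ← isCoatom_iff_finrank_add_one_eq.1 hH] at hfinrank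
  omega

variable [Finite K]

open scoped Classical in
theorem IsVectorSpacePartition.sum_card_pow_finrank (hP : IsVectorSpacePartition P)
    (hH : IsCoatom H) :
    ∑ U ∈ P with ¬ U ≤ H, Nat.card K ^ finrank K U = Nat.card K ^ finrank K V := by
  have : Finite V := Module.finite_of_finite K
  calc ∑ U ∈ P with ¬ U ≤ H, Nat.card K ^ finrank K U
      = ∑ U ∈ P with ¬ U ≤ H, Nat.card ↥(U ⊓ H) * Nat.card K := by
        refine Finset.sum_congr rfl fun U hU ↦ ?_
        rw [← finrank_inf_add_one_of_isCoatom hH (Finset.mem_filter.1 hU).2, pow_succ,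
          natCard_eq_pow_finrank (K := K) (V := ↥(U ⊓ H))]
    _ = Nat.card H * Nat.card K := by rw [← Finset.sum_mul, hP.sum_natCard_inf hH]
    _ = Nat.card K ^ finrank K V := by
        rw [← isCoatom_iff_finrank_add_one_eq.1 hH, pow_succ,
          natCard_eq_pow_finrank (K := K) (V := H)]

open scoped Classical in
theorem IsVectorSpacePartition.pow_sub_dvd_card_not_le {a b : ℕ} (hP : IsVectorSpacePartition P)
    (hdim : ∀ U ∈ P, finrank K U = a ∨ b ≤ finrank K U) (hb : b ≤ finrank K V)
    (hH : IsCoatom H) :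
    Nat.card K ^ (b - a) ∣ #{U ∈ P | ¬ U ≤ H ∧ finrank K U = a} := by
  refine pow_sub_dvd_of_pow_dvd_mul_pow Nat.card_pos ?_
  have hsplit := hP.sum_card_pow_finrank hH
  rw [← Finset.sum_filter_add_sum_filter_not _ (fun U : Submodule K V ↦ finrank K U = a),
    Finset.filter_filter, Finset.filter_filter] at hsplit
  have hsmall : ∑ U ∈ P with ¬ U ≤ H ∧ finrank K U = a, Nat.card K ^ finrank K U
      = #{U ∈ P | ¬ U ≤ H ∧ finrank K U = a} * Nat.card K ^ a :=
    Finset.sum_const_nat fun U hU ↦ by rw [(Finset.mem_filter.1 hU).2.2]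
  have hlarge : Nat.card K ^ b ∣
      ∑ U ∈ P with ¬ U ≤ H ∧ ¬ finrank K U = a, Nat.card K ^ finrank K U := by
    refine Finset.dvd_sum fun U hU ↦ pow_dvd_pow _ ?_
    simp only [Finset.mem_filter] at hU
    exact (hdim U hU.1).resolve_left hU.2.2
  rw [← hsmall, ← Nat.dvd_add_left hlarge, hsplit]
  exact pow_dvd_pow _ hb

theorem tail_divisible_mod_hyperplane_general {a b : ℕ} (hP : IsVectorSpacePartition P)
    (hdim : ∀ U ∈ P, finrank K U = a ∨ b ≤ finrank K U) (hb : b ≤ finrank K V)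
    (hH : IsCoatom H) :
    {U | U ∈ P ∧ finrank K U = a}.ncard ≡
      {U | (U ∈ P ∧ finrank K U = a) ∧ U ≤ H}.ncard [MOD Nat.card K ^ (b - a)] := by
  classical
  let N : Finset (Submodule K V) := {U ∈ P | finrank K U = a}
  have hN : {U | U ∈ P ∧ finrank K U = a}.ncard = N.card := by
    rw [← Set.ncard_coe_finset, Finset.coe_filter]
  have hNH : {U | (U ∈ P ∧ finrank K U = a) ∧ U ≤ H}.ncard = #{U ∈ N | U ≤ H} := by
    simp only [← Set.ncard_coe_finset, Finset.coe_filter, N, Finset.mem_filter]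
  have hdvd : Nat.card K ^ (b - a) ∣ #{U ∈ N | ¬ U ≤ H} := by
    simpa only [N, Finset.filter_filter, and_comm] using hP.pow_sub_dvd_card_not_le hdim hb hH
  rw [hN, hNH, ← Finset.card_filter_add_card_filter_not (s := N) (· ≤ H)]
  exact (Nat.modEq_zero_iff_dvd.2 hdvd).add_left _

end Hyperplane

/-- For a vector space partition of type `d_l^{u_l}⋯d_2^{u_2}d_1^{u_1}` of `F_q^v`
(with `u_1,u_2 > 0` and `d_l > ⋯ > d_2 > d_1 ≥ 1`), the number of `d_1`-dimensional
members contained in any hyperplane is congruent to their total number modulo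
`q^{d_2-d_1}`.  Here `d 0 = d_1`, `d 1 = d_2`, etc. -/
theorem tail_divisible_mod_hyperplane
    {F : Type} [Field F] [Fintype F] (q v l : ℕ)
    (hq : q = Fintype.card F) (hl : 2 ≤ l)
    (d u : Fin l → ℕ) (hd : StrictMono d) (hd1 : 1 ≤ d ⟨0, by omega⟩)
    (hu1 : 0 < u ⟨0, by omega⟩) (hu2 : 0 < u ⟨1, by omega⟩)
    (P : Finset (Submodule F (Fin v → F)))
    (hpart : ∀ x : Fin v → F, x ≠ 0 →
      ∃! U : Submodule F (Fin v → F), U ∈ P ∧ x ∈ U)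
    (htype : ∀ U ∈ P, ∃ i : Fin l, Module.finrank F ↥U = d i)
    (hcount : ∀ i : Fin l, u i = Set.ncard
      {U : Submodule F (Fin v → F) | U ∈ P ∧ Module.finrank F ↥U = d i}) :
    ∀ H : Submodule F (Fin v → F), Module.finrank F ↥H = v - 1 →
      u ⟨0, by omega⟩ ≡
        Set.ncard {U : Submodule F (Fin v → F) |
          (U ∈ P ∧ Module.finrank F ↥U = d ⟨0, by omega⟩) ∧ U ≤ H}
        [MOD q ^ (d ⟨1, by omega⟩ - d ⟨0, by omega⟩)] := by
  intro H hH
  have hpos : 0 < d ⟨1, by omega⟩ := hd1.trans (hd.monotone (Nat.zero_le 1))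
  have hb : d ⟨1, by omega⟩ ≤ finrank F (Fin v → F) := by
    obtain ⟨U, -, hU⟩ := Set.nonempty_of_ncard_ne_zero (hcount ⟨1, by omega⟩ ▸ hu2).ne'
    exact hU ▸ U.finrank_le
  have hcoatom : IsCoatom H := isCoatom_iff_finrank_add_one_eq.2 <| by
    rw [finrank_fin_fun] at hb ⊢
    omega
  have hdim (U) (hU : U ∈ P) :
      finrank F U = d ⟨0, by omega⟩ ∨ d ⟨1, by omega⟩ ≤ finrank F U := by
    obtain ⟨i, hi⟩ := htype U hU
    exact hi ▸ eq_or_le_of_monotone_fin hl hd.monotone i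
  rw [hq, ← Nat.card_eq_fintype_card, hcount]
  exact tail_divisible_mod_hyperplane_general hpart hdim hb hcoatom
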